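/- arXiv:1810.12415 — 2 statements merged into one kernel-verified Lean document; each statement's English description precedes it below -/
import Mathlib

section
/- 𝔏(ℤ²) is a proper subset of 𝔏(H): every language recognized by a ℤ²-automaton is recognized by an H-automaton, and the language MULT = { xᵖ y^q z^{pq} : p, q ≥ 0 } over the alphabet {x, y, z} is recognized by an H-automaton but by no ℤ²-automaton. -/
/-- A `G`-automaton over input alphabet `α`: a nondeterministic finite automaton
equipped with a register holding an element of the group `G`. -/
structure GAutomaton (α : Type*) (G : Type*) [Group G] where
  /-- the (finite) state set -/
  Q : Type
  finQ : Finite Q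
  /-- the initial state -/
  q0 : Q
  /-- the accepting states -/
  acc : Set Q
  /-- the (finite) transition relation; `none` stands for ε -/
  δ : Set (Q × Option α × Q × G)
  finδ : δ.Finite

namespace GAutomaton

variable {α : Type*} {G : Type*} [Group G]

/-- One computation step between configurations `(state, register, remaining input)`. -/
def Step (M : GAutomaton α G) (c c' : M.Q × G × List α) : Prop :=
  ∃ σ m, (c.1, σ, c'.1, m) ∈ M.δ ∧ c'.2.1 = c.2.1 * m ∧
    match σ with
    | none => c'.2.2 = c.2.2
    | some s => c.2.2 = s :: c'.2.2

/-- `M.StepsIn k c c'` : configuration `c'` is reachable from `c` in exactly `k` steps. -/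
def StepsIn (M : GAutomaton α G) : ℕ → (M.Q × G × List α) → (M.Q × G × List α) → Prop
  | 0, c, c' => c = c'
  | n + 1, c, c' => ∃ d, M.Step c d ∧ M.StepsIn n d c'

/-- `M` accepts the word `w` within `t` computation steps. -/
def AcceptsIn (M : GAutomaton α G) (w : List α) (t : ℕ) : Prop :=
  ∃ k ≤ t, ∃ q ∈ M.acc, M.StepsIn k (M.q0, 1, w) (q, 1, [])

/-- The language recognized by `M`. -/
def lang (M : GAutomaton α G) : Language α := {w | ∃ t, M.AcceptsIn w t}

/-- `M` is real-time if every transition consumes an input symbol. -/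
def RealTime (M : GAutomaton α G) : Prop := ∀ tr ∈ M.δ, tr.2.1 ≠ none

end GAutomaton

/-- `L ∈ 𝔏(G)` : the language `L` is recognized by some `G`-automaton. -/
def GRecognizable (G : Type*) [Group G] {α : Type*} (L : Language α) : Prop :=
  ∃ M : GAutomaton α G, M.lang = L

/-- `L ∈ 𝔏(G)ʷ_{t(n)}` : `L` is recognized by a weakly `t(n)` time-bounded `G`-automaton. -/
def GRecognizableInTime (G : Type*) [Group G] {α : Type*} (L : Language α) (t : ℕ → ℕ) : Prop :=
  ∃ M : GAutomaton α G, M.lang = L ∧ ∀ w ∈ L, M.AcceptsIn w (t w.length)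

/-- `L ∈ 𝔏(G)ʷ_{O(n)}` : `L` is recognized by a weakly linear-time bounded `G`-automaton. -/
def GRecognizableLinTime (G : Type*) [Group G] {α : Type*} (L : Language α) : Prop :=
  ∃ C : ℕ, GRecognizableInTime G L (fun n => C * n + C)

/-- The discrete Heisenberg group: the group of 3×3 upper unitriangular integer matrices,
as a subgroup of `SL(3,ℤ)`. -/
def Heisenberg : Subgroup (Matrix.SpecialLinearGroup (Fin 3) ℤ) where
  carrier := {M | M.1 0 0 = 1 ∧ M.1 1 1 = 1 ∧ M.1 2 2 = 1 ∧
    M.1 1 0 = 0 ∧ M.1 2 0 = 0 ∧ M.1 2 1 = 0}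
  one_mem' := by
    simp [Matrix.SpecialLinearGroup.coe_one, Matrix.one_apply]
  mul_mem' := by
    rintro A B ⟨hA1, hA2, hA3, hA4, hA5, hA6⟩ ⟨hB1, hB2, hB3, hB4, hB5, hB6⟩
    refine ⟨?_, ?_, ?_, ?_, ?_, ?_⟩ <;>
      simp [Matrix.SpecialLinearGroup.coe_mul, Matrix.mul_apply, Fin.sum_univ_three,
        hA1, hA2, hA3, hA4, hA5, hA6, hB1, hB2, hB3, hB4, hB5, hB6]
  inv_mem' := by
    rintro A ⟨hA1, hA2, hA3, hA4, hA5, hA6⟩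
    have hinv : (A⁻¹).1 = (A.1).adjugate := Matrix.SpecialLinearGroup.coe_inv A
    refine ⟨?_, ?_, ?_, ?_, ?_, ?_⟩ <;>
      simp [hinv, Matrix.adjugate_fin_three, Matrix.vecHead, Matrix.vecTail, hA1, hA2, hA3, hA4, hA5, hA6]

/-- The language `MULT = { xᵖ yᑫ z^{pq} : p, q ≥ 0 }` over the alphabet `{x, y, z}`
(encoded as `0, 1, 2 : Fin 3`). -/
def MULT : Language (Fin 3) :=
  {w | ∃ p q : ℕ,
    w = List.replicate p 0 ++ List.replicate q 1 ++ List.replicate (p * q) 2}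

open Pointwise

namespace GAutomaton

variable {α : Type*} {G : Type*} [Group G]

theorem mem_lang_iff (M : GAutomaton α G) (w : List α) :
    w ∈ M.lang ↔ ∃ k, ∃ q ∈ M.acc, M.StepsIn k (M.q0, 1, w) (q, 1, []) :=
  ⟨fun ⟨_, k, _, h⟩ => ⟨k, h⟩, fun ⟨k, h⟩ => ⟨k, k, le_rfl, h⟩⟩

theorem step_iff (M : GAutomaton α G) (q q' : M.Q) (g g' : G) (w w' : List α) :
    M.Step (q, g, w) (q', g', w') ↔
      ∃ σ m, (q, σ, q', m) ∈ M.δ ∧ g' = g * m ∧ w = σ.toList ++ w' := by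
  refine exists_congr fun σ => exists_congr fun m => and_congr_right fun _ =>
    and_congr_right fun _ => ?_
  cases σ
  · exact eq_comm
  · exact Iff.rfl

/-! ### Change of register group -/

section MapRegister

variable {H : Type*} [Group H]

/-- The automaton obtained by applying a homomorphism to all register operations. -/
def mapRegister (M : GAutomaton α G) (f : G →* H) : GAutomaton α H where
  Q := M.Q
  finQ := M.finQ
  q0 := M.q0
  acc := M.acc
  δ := (fun t => (t.1, t.2.1, t.2.2.1, f t.2.2.2)) '' M.δ
  finδ := M.finδ.image _

theorem StepsIn.mapRegister {M : GAutomaton α G} (f : G →* H) {k : ℕ} {q q' : M.Q} {g g' : G}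
    {w w' : List α} (h : M.StepsIn k (q, g, w) (q', g', w')) :
    (M.mapRegister f).StepsIn k (q, f g, w) (q', f g', w') := by
  induction k generalizing q g w with
  | zero =>
    obtain ⟨rfl, rfl, rfl⟩ : q = q' ∧ g = g' ∧ w = w' := by simpa [StepsIn] using h
    rfl
  | succ k ih =>
    obtain ⟨⟨r, x, u⟩, ⟨σ, m, hδ, rfl, hw⟩, h⟩ := h
    exact ⟨(r, f (g * m), u), ⟨σ, f m, ⟨_, hδ, rfl⟩, map_mul f g m, hw⟩, ih h⟩

theorem StepsIn.of_mapRegister {M : GAutomaton α G} {f : G →* H} {k : ℕ} {q q' : M.Q} {g : G}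
    {h' : H} {w w' : List α} (h : (M.mapRegister f).StepsIn k (q, f g, w) (q', h', w')) :
    ∃ g', f g' = h' ∧ M.StepsIn k (q, g, w) (q', g', w') := by
  induction k generalizing q g w with
  | zero =>
    have h : ((q, f g, w) : M.Q × H × List α) = (q', h', w') := h
    simp only [Prod.mk.injEq] at h
    obtain ⟨rfl, rfl, rfl⟩ := h
    exact ⟨g, rfl, rfl⟩
  | succ k ih =>
    obtain ⟨⟨r, x, u⟩, ⟨σ, m, ⟨⟨a, b, c, d⟩, hδ, he⟩, hx, hw⟩, h⟩ := h
    cases he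
    obtain rfl : x = f (g * d) := by rw [map_mul]; exact hx
    obtain ⟨g', hg', h⟩ := ih h
    exact ⟨g', hg', (r, g * d, u), ⟨b, d, hδ, rfl, hw⟩, h⟩

theorem lang_mapRegister (M : GAutomaton α G) {f : G →* H} (hf : Function.Injective f) :
    (M.mapRegister f).lang = M.lang := by
  ext w
  simp only [mem_lang_iff]
  constructor
  · rintro ⟨k, q, hq, h⟩
    obtain ⟨g', hg', h⟩ := StepsIn.of_mapRegister (M := M) (f := f) (g := 1) (k := k)
      (q := M.q0) (q' := q) (h' := 1) (w := w) (w' := []) (by rw [map_one]; exact h)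
    obtain rfl : g' = 1 := hf (by rw [hg', map_one])
    exact ⟨k, q, hq, h⟩
  · rintro ⟨k, q, hq, h⟩
    have := h.mapRegister f
    rw [map_one] at this
    exact ⟨k, q, hq, this⟩

end MapRegister

end GAutomaton

/-! ### Weights of paths in a finite graph -/

/-- `WeightedPath E S q w q'`: there is a nonempty path from `q` to `q'` along edges in `E` with
total weight `w`, all of whose intermediate vertices lie in `S`. -/
inductive WeightedPath {Q W : Type*} [AddCommMonoid W] (E : Set (Q × W × Q)) (S : Set Q) :
    Q → W → Q → Prop
  | edge {q w q'} : (q, w, q') ∈ E → WeightedPath E S q w q'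
  | cons {q w r w' q'} : (q, w, r) ∈ E → r ∈ S → WeightedPath E S r w' q' →
      WeightedPath E S q (w + w') q'

namespace WeightedPath

variable {Q W : Type*} [AddCommMonoid W] {E : Set (Q × W × Q)} {S T : Set Q}

theorem mono (hST : S ⊆ T) {q w q'} (h : WeightedPath E S q w q') : WeightedPath E T q w q' := by
  induction h with
  | edge h => exact .edge h
  | cons h hr _ ih => exact .cons h (hST hr) ih

theorem trans {q w r w' q'} (h : WeightedPath E S q w r) (hr : r ∈ S)
    (h' : WeightedPath E S r w' q') : WeightedPath E S q (w + w') q' := by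
  induction h with
  | edge h => exact .cons h hr h'
  | cons h hs _ ih => rw [add_assoc]; exact .cons h hs (ih hr h')

theorem closure_add {s c w q'} (hs : s ∈ S)
    (hc : c ∈ AddSubmonoid.closure {w | WeightedPath E S s w s})
    (h : WeightedPath E S s w q') : WeightedPath E S s (c + w) q' := by
  induction hc using AddSubmonoid.closure_induction generalizing w with
  | mem x hx => exact trans hx hs h
  | zero => rwa [zero_add]
  | add x y _ _ ihx ihy => rw [add_assoc]; exact ihx (ihy h)

theorem setOf_insert (s q q' : Q) :
    {w | WeightedPath E (insert s S) q w q'} = {w | WeightedPath E S q w q'} ∪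
      ({w | WeightedPath E S q w s} +
        (AddSubmonoid.closure {w | WeightedPath E S s w s} : Set W) +
        {w | WeightedPath E S s w q'}) := by
  have hS : S ⊆ insert s S := Set.subset_insert s S
  have hs : s ∈ insert s S := Set.mem_insert s S
  ext w
  constructor
  · intro h
    induction h with
    | edge h => exact .inl (.edge h)
    | @cons q w r w' q' h hr _ ih =>
      rcases ih with ih | ⟨_, ⟨a, ha, c, hc, rfl⟩, b, hb, rfl⟩
      · rcases hr with rfl | hr
        · exact .inr ⟨w + 0, ⟨w, .edge h, 0, zero_mem _, rfl⟩, w', ih, by simp⟩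
        · exact .inl (.cons h hr ih)
      · rcases hr with rfl | hr
        · exact .inr ⟨w + (a + c), ⟨w, .edge h, a + c,
            add_mem (AddSubmonoid.subset_closure ha) hc, rfl⟩, b, hb, by simp [add_assoc]⟩
        · exact .inr ⟨w + a + c, ⟨w + a, .cons h hr ha, c, hc, rfl⟩, b, hb, by simp [add_assoc]⟩
  · rintro (h | ⟨_, ⟨a, ha, c, hc, rfl⟩, b, hb, rfl⟩)
    · exact h.mono hS
    · have hc' : c ∈ AddSubmonoid.closure {w | WeightedPath E (insert s S) s w s} :=
        AddSubmonoid.closure_mono (fun _ h => h.mono hS) hc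
      have := (mono hS ha).trans hs (closure_add hs hc' (mono hS hb))
      rwa [← add_assoc] at this

theorem isSemilinearSet (hE : E.Finite) (hS : S.Finite) (q q' : Q) :
    IsSemilinearSet {w | WeightedPath E S q w q'} := by
  induction S, hS using Set.Finite.induction_on generalizing q q' with
  | empty =>
    refine .of_finite ((hE.image fun e => e.2.1).subset ?_)
    rintro w (h | ⟨-, h, -⟩)
    · exact ⟨_, h, rfl⟩
    · exact h.elim
  | @insert s S _ _ ih =>
    rw [setOf_insert]
    exact (ih q q').union (((ih q s).add (ih s s).closure).add (ih s q'))

end WeightedPath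

/-! ### Parikh images of languages recognized over commutative groups -/

/-- The Parikh vector of a word: the number of occurrences of each letter. -/
def parikh {α : Type*} [DecidableEq α] (w : List α) : α → ℕ := fun a => w.count a

theorem parikh_append {α : Type*} [DecidableEq α] (u v : List α) :
    parikh (u ++ v) = parikh u + parikh v := by
  ext a
  simp [parikh]

theorem parikh_nil {α : Type*} [DecidableEq α] : parikh ([] : List α) = 0 := by
  ext a
  simp [parikh]

namespace GAutomaton

variable {α : Type*} [DecidableEq α] {G : Type*} [CommGroup G]

/-- The transition graph, weighted by the Parikh vector of the consumed input and the register
operation. -/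
def weightedEdges (M : GAutomaton α G) : Set (M.Q × ((α → ℕ) × Additive G) × M.Q) :=
  (fun t => (t.1, (parikh t.2.1.toList, Additive.ofMul t.2.2.2), t.2.2.1)) '' M.δ

theorem StepsIn.weightedPath {M : GAutomaton α G} {k : ℕ} {q q' : M.Q} {g : G} {w : List α}
    (h : M.StepsIn k (q, g, w) (q', 1, [])) :
    (q = q' ∧ g = 1 ∧ w = []) ∨
      WeightedPath M.weightedEdges Set.univ q (parikh w, Additive.ofMul g⁻¹) q' := by
  induction k generalizing q g w with
  | zero => exact .inl (by simpa [StepsIn] using h)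
  | succ k ih =>
    obtain ⟨⟨r, x, u⟩, hstep, h⟩ := h
    obtain ⟨σ, m, hδ, rfl, hw⟩ := (M.step_iff ..).1 hstep
    have hE : (q, (parikh σ.toList, Additive.ofMul m), r) ∈ M.weightedEdges := ⟨_, hδ, rfl⟩
    right
    rcases ih h with ⟨rfl, hg, rfl⟩ | h
    · rw [eq_inv_of_mul_eq_one_right hg] at hE
      rw [hw, List.append_nil]
      exact .edge hE
    · convert WeightedPath.cons hE (Set.mem_univ r) h using 1
      rw [hw, parikh_append, Prod.mk_add_mk, ← ofMul_mul]
      simp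

theorem exists_stepsIn_of_weightedPath {M : GAutomaton α G} {S : Set M.Q} {q q' : M.Q}
    {v : (α → ℕ) × Additive G} (h : WeightedPath M.weightedEdges S q v q') :
    ∃ w : List α, parikh w = v.1 ∧ ∀ g u, ∃ k,
      M.StepsIn k (q, g, w ++ u) (q', g * v.2.toMul, u) := by
  have single : ∀ {q v q'}, (q, v, q') ∈ M.weightedEdges →
      ∃ w : List α, parikh w = v.1 ∧ ∀ g u,
        M.Step (q, g, w ++ u) (q', g * v.2.toMul, u) := by
    rintro q v q' ⟨⟨p, σ, p', m⟩, hδ, he⟩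
    cases he
    exact ⟨σ.toList, rfl, fun g u => (M.step_iff ..).2 ⟨σ, m, hδ, rfl, rfl⟩⟩
  induction h with
  | edge h =>
    obtain ⟨w, hw, h⟩ := single h
    exact ⟨w, hw, fun g u => ⟨1, _, h g u, rfl⟩⟩
  | cons h _ _ ih =>
    obtain ⟨w, hw, h⟩ := single h
    obtain ⟨w', hw', h'⟩ := ih
    refine ⟨w ++ w', by rw [parikh_append, hw, hw']; rfl, fun g u => ?_⟩
    obtain ⟨k, hk⟩ := h' (g * _) u
    refine ⟨k + 1, _, List.append_assoc w w' u ▸ h g (w' ++ u), ?_⟩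
    simpa [mul_assoc] using hk

theorem image_parikh_lang (M : GAutomaton α G) :
    parikh '' (M.lang : Set (List α)) = AddMonoidHom.inl (α → ℕ) (Additive G) ⁻¹'
      ⋃ q ∈ M.acc, ({v | v = 0 ∧ q = M.q0} ∪
        {v | WeightedPath M.weightedEdges Set.univ M.q0 v q}) := by
  ext v
  simp only [Set.mem_preimage, Set.mem_iUnion, exists_prop]
  constructor
  · rintro ⟨w, hw, rfl⟩
    obtain ⟨k, q, hq, h⟩ := (M.mem_lang_iff w).1 hw
    refine ⟨q, hq, ?_⟩
    rcases h.weightedPath with ⟨rfl, -, rfl⟩ | h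
    · exact .inl ⟨by rw [parikh_nil, map_zero], rfl⟩
    · exact .inr (by simpa using h)
  · rintro ⟨q, hq, ⟨hv, rfl⟩ | h⟩
    · refine ⟨[], (M.mem_lang_iff _).2 ⟨0, _, hq, rfl⟩, ?_⟩
      rw [parikh_nil]
      exact (congrArg Prod.fst hv).symm
    · obtain ⟨w, hw, h⟩ := exists_stepsIn_of_weightedPath h
      obtain ⟨k, hk⟩ := h 1 []
      exact ⟨w, (M.mem_lang_iff w).2 ⟨k, q, hq, by simpa using hk⟩, hw⟩

end GAutomaton

/-- A language recognized over a commutative group has a semilinear Parikh image. -/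
theorem GRecognizable.isSemilinearSet_image_parikh {α : Type*} [DecidableEq α] [Finite α]
    {G : Type*} [CommGroup G] {L : Language α} (hL : GRecognizable G L) :
    IsSemilinearSet (parikh '' (L : Set (List α))) := by
  obtain ⟨M, rfl⟩ := hL
  have := M.finQ
  rw [M.image_parikh_lang]
  refine IsSemilinearSet.preimage (.biUnion (Set.toFinite _) fun q _ => .union ?_ ?_) _
  · exact .of_finite ((Set.finite_singleton 0).subset fun _ h => h.1)
  · exact WeightedPath.isSemilinearSet (M.finδ.image _) Set.finite_univ _ _

/-! ### The graph of multiplication is not semilinear -/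

theorem image_parikh_MULT :
    parikh '' (MULT : Set (List (Fin 3))) = {v | v 2 = v 0 * v 1} := by
  ext v
  constructor
  · rintro ⟨_, ⟨p, q, rfl⟩, rfl⟩
    simp [parikh, List.count_replicate]
  · intro hv
    refine ⟨_, ⟨v 0, v 1, rfl⟩, ?_⟩
    ext i
    fin_cases i
    · simp [parikh, List.count_replicate]
    · simp [parikh, List.count_replicate]
    · simpa [parikh, List.count_replicate] using hv.symm

theorem IsLinearSet.exists_bound_of_subset_mul {t : Set (Fin 3 → ℕ)} (ht : IsLinearSet t)
    (hsub : t ⊆ {v | v 2 = v 0 * v 1}) : ∃ N, ∀ v ∈ t, v 0 ≤ N ∨ v 1 ≤ N := by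
  obtain ⟨a, P, -, rfl⟩ := ht
  have mem : ∀ x ∈ AddSubmonoid.closure P, a 2 + x 2 = (a 0 + x 0) * (a 1 + x 1) :=
    fun x hx => hsub ⟨x, hx, rfl⟩
  have cross : ∀ x ∈ AddSubmonoid.closure P, ∀ y ∈ AddSubmonoid.closure P, x 0 * y 1 = 0 := by
    intro x hx y hy
    have h₀ := mem 0 (zero_mem _)
    have h₁ := mem x hx
    have h₂ := mem y hy
    have h₃ := mem (x + y) (add_mem hx hy)
    simp only [Pi.zero_apply, Pi.add_apply] at h₀ h₃
    nlinarith [Nat.zero_le (x 0 * y 1), Nat.zero_le (y 0 * x 1)]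
  refine ⟨a 0 + a 1, ?_⟩
  rintro _ ⟨x, hx, rfl⟩
  have := cross x hx x hx
  simp only [vadd_eq_add, Pi.add_apply]
  rcases Nat.mul_eq_zero.1 this with h | h <;> omega

theorem not_isSemilinearSet_mul : ¬ IsSemilinearSet {v : Fin 3 → ℕ | v 2 = v 0 * v 1} := by
  rintro ⟨S, hS, hlin, hS'⟩
  have key : ∀ t ∈ S, ∃ N, ∀ v ∈ t, v 0 ≤ N ∨ v 1 ≤ N := fun t ht =>
    (hlin t ht).exists_bound_of_subset_mul (hS' ▸ Set.subset_sUnion_of_mem ht)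
  choose! f hf using key
  obtain ⟨N, hN⟩ := (hS.image f).bddAbove
  have : ![N + 1, N + 1, (N + 1) * (N + 1)] ∈ ⋃₀ S := by
    rw [← hS']
    simp
  obtain ⟨t, ht, hv⟩ := this
  have h₁ : f t ≤ N := hN ⟨t, ht, rfl⟩
  have h₂ := hf t ht _ hv
  simp at h₂
  omega

/-! ### The Heisenberg group -/

/-- The element of the Heisenberg group with superdiagonal entries `a`, `b` and corner entry
`c`. -/
def heis (a b c : ℤ) : Heisenberg :=
  ⟨⟨!![1, a, c; 0, 1, b; 0, 0, 1], by simp [Matrix.det_fin_three]⟩, by refine ⟨?_, ?_, ?_, ?_, ?_, ?_⟩ <;> rfl⟩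

theorem heis_mul (a b c a' b' c' : ℤ) :
    heis a b c * heis a' b' c' = heis (a + a') (b + b') (c + c' + a * b') := by
  apply Subtype.ext
  apply Subtype.ext
  change !![1, a, c; 0, 1, b; 0, 0, 1] * !![1, a', c'; 0, 1, b'; 0, 0, 1] =
    !![1, a + a', c + c' + a * b'; 0, 1, b + b'; 0, 0, 1]
  ext i j
  fin_cases i <;> fin_cases j <;> simp [Matrix.mul_apply, Fin.sum_univ_three] <;> ring

theorem heis_zero : heis 0 0 0 = 1 := by
  apply Subtype.ext
  apply Subtype.ext
  ext i j
  fin_cases i <;> fin_cases j <;> simp [heis]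

theorem heis_inj {a b c a' b' c' : ℤ} :
    heis a b c = heis a' b' c' ↔ a = a' ∧ b = b' ∧ c = c' := by
  refine ⟨fun h => ?_, by rintro ⟨rfl, rfl, rfl⟩; rfl⟩
  have key (i j : Fin 3) := congrArg (fun A : Heisenberg => A.1.1 i j) h
  exact ⟨by simpa [heis] using key 0 1, by simpa [heis] using key 1 2,
    by simpa [heis] using key 0 2⟩

theorem heis_eq_one {a b c : ℤ} : heis a b c = 1 ↔ a = 0 ∧ b = 0 ∧ c = 0 := by
  rw [← heis_zero, heis_inj]

/-- The embedding of `ℤ²` into the Heisenberg group as the matrices with vanishing `(1, 2)`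
entry. -/
def heisenbergEmbedding : Multiplicative (ℤ × ℤ) →* Heisenberg where
  toFun v := heis v.toAdd.1 0 v.toAdd.2
  map_one' := heis_zero
  map_mul' u v := by simp [heis_mul]

theorem heisenbergEmbedding_injective : Function.Injective heisenbergEmbedding := by
  intro u v h
  obtain ⟨h₁, -, h₂⟩ := heis_inj.1 h
  exact Multiplicative.toAdd.injective (Prod.ext h₁ h₂)

/-! ### A Heisenberg automaton for `MULT` -/

/-- An automaton computing `XᵖYᑫZ⁻ʳX⁻ⁱY⁻ʲ` on input `xᵖyᑫzʳ`, where `i` and `j` are guessed. Its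
states are the five phases of this computation, which are passed through in increasing order. -/
def multAutomaton : GAutomaton (Fin 3) Heisenberg where
  Q := Fin 5
  finQ := inferInstance
  q0 := 0
  acc := Set.univ
  δ := {t | t.1 ≤ t.2.2.1 ∧
    t.2.1 = ![some 0, some 1, some 2, none, none] t.2.2.1 ∧
    t.2.2.2 = ![heis 1 0 0, heis 0 1 0, heis 0 0 (-1), heis (-1) 0 0, heis 0 (-1) 0] t.2.2.1}
  finδ := by
    refine (Set.finite_range fun s : Fin 5 × Fin 5 =>
      ((s.1, ![some 0, some 1, some 2, none, none] s.2, s.2,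
        ![heis 1 0 0, heis 0 1 0, heis 0 0 (-1), heis (-1) 0 0, heis 0 (-1) 0] s.2) :
          Fin 5 × Option (Fin 3) × Fin 5 × Heisenberg)).subset ?_
    rintro ⟨s, σ, l, m⟩ ⟨-, h₁, h₂⟩
    exact ⟨(s, l), by simp_all⟩

namespace multAutomaton

/-- Some computation of `multAutomaton` from the given configuration accepts. -/
def Accepts (s : Fin 5) (g : Heisenberg) (w : List (Fin 3)) : Prop :=
  ∃ k q, multAutomaton.StepsIn k (s, g, w) (q, 1, [])

theorem mem_lang_iff (w : List (Fin 3)) : w ∈ multAutomaton.lang ↔ Accepts 0 1 w := by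
  rw [GAutomaton.mem_lang_iff]
  exact ⟨fun ⟨k, q, _, h⟩ => ⟨k, q, h⟩, fun ⟨k, q, h⟩ => ⟨k, q, trivial, h⟩⟩

theorem Accepts.step {s : Fin 5} (l : Fin 5) (hs : s ≤ l) {g : Heisenberg} {w : List (Fin 3)}
    (h : Accepts l (g * ![heis 1 0 0, heis 0 1 0, heis 0 0 (-1), heis (-1) 0 0, heis 0 (-1) 0] l)
      w) :
    Accepts s g ((![some 0, some 1, some 2, none, none] l : Option (Fin 3)).toList ++ w) := by
  obtain ⟨k, q, h⟩ := h
  exact ⟨k + 1, q, (l, _, w),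
    (multAutomaton.step_iff ..).2 ⟨_, _, ⟨hs, rfl, rfl⟩, rfl, rfl⟩, h⟩

theorem accepts_clear_right (j : ℕ) (s : Fin 5) : Accepts s (heis 0 j 0) [] := by
  induction j generalizing s with
  | zero => exact ⟨0, s, by rw [Nat.cast_zero, heis_zero]; rfl⟩
  | succ j ih => exact Accepts.step 4 (Fin.le_last s) (by simpa [heis_mul] using ih 4)

theorem accepts_clear_left (i j : ℕ) (s : Fin 5) (hs : s ≤ 3) : Accepts s (heis i j 0) [] := by
  induction i generalizing s with
  | zero => simpa using accepts_clear_right j s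
  | succ i ih => exact Accepts.step 3 hs (by simpa [heis_mul] using ih 3 le_rfl)

theorem accepts_read_z (i j r : ℕ) (s : Fin 5) (hs : s ≤ 2) :
    Accepts s (heis i j r) (List.replicate r 2) := by
  induction r generalizing s with
  | zero => simpa using accepts_clear_left i j s (hs.trans (by decide))
  | succ r ih => exact Accepts.step 2 hs (by simpa [heis_mul] using ih 2 le_rfl)

theorem accepts_read_y (i j q : ℕ) (s : Fin 5) (hs : s ≤ 1) :
    Accepts s (heis i j (i * j)) (List.replicate q 1 ++ List.replicate (i * (j + q)) 2) := by
  induction q generalizing s j with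
  | zero => simpa using accepts_read_z i j (i * j) s (hs.trans (by decide))
  | succ q ih =>
    refine Accepts.step 1 hs ?_
    have := ih (j + 1) 1 le_rfl
    rw [add_assoc, add_comm 1 q] at this
    simpa [heis_mul, mul_add] using this

theorem accepts_read_x (i p q : ℕ) :
    Accepts 0 (heis i 0 0)
      (List.replicate p 0 ++ (List.replicate q 1 ++ List.replicate ((i + p) * q) 2)) := by
  induction p generalizing i with
  | zero => simpa using accepts_read_y i 0 q 0 (by decide)
  | succ p ih =>
    refine Accepts.step 0 le_rfl ?_
    have := ih (i + 1)
    rw [add_assoc, add_comm 1 p] at this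
    simpa [heis_mul] using this

theorem exists_of_accepts {s : Fin 5} {a b c : ℤ} {w : List (Fin 3)}
    (h : Accepts s (heis a b c) w) :
    ∃ p q r i : ℕ, w = List.replicate p 0 ++ List.replicate q 1 ++ List.replicate r 2 ∧
      a + p = i ∧ c + (a + p) * q = r ∧
      (0 < s → p = 0) ∧ (1 < s → q = 0) ∧ (2 < s → r = 0) ∧ (3 < s → i = 0) := by
  obtain ⟨k, q', h⟩ := h
  induction k generalizing s a b c w with
  | zero =>
    have h : ((s, heis a b c, w) : Fin 5 × Heisenberg × List (Fin 3)) = (q', 1, []) := h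
    obtain ⟨-, h⟩ := Prod.mk.inj h
    obtain ⟨hg, rfl⟩ := Prod.mk.inj h
    obtain ⟨rfl, rfl, rfl⟩ := heis_eq_one.1 hg
    exact ⟨0, 0, 0, 0, by simp⟩
  | succ k ih =>
    obtain ⟨⟨(l : Fin 5), x, u⟩, hstep, h⟩ := h
    obtain ⟨σ, m, ⟨hs, hσ, hm⟩, rfl, rfl⟩ := (multAutomaton.step_iff ..).1 hstep
    change s ≤ l at hs
    change σ = ![some 0, some 1, some 2, none, none] l at hσ
    change m = ![heis 1 0 0, heis 0 1 0, heis 0 0 (-1), heis (-1) 0 0, heis 0 (-1) 0] l at hm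
    subst hσ hm
    fin_cases l
    · change multAutomaton.StepsIn k ((0 : Fin 5), heis a b c * heis 1 0 0, u) (q', 1, []) at h
      rw [heis_mul] at h
      obtain ⟨p, q, r, i, rfl, ha, hc, h₀, h₁, h₂, h₃⟩ := ih h
      obtain rfl : s = 0 := by simpa using hs
      refine ⟨p + 1, q, r, i, rfl, ?_, ?_, by simp, by simp, by simp, by simp⟩
      · push_cast; linarith
      · push_cast; linarith
    · change multAutomaton.StepsIn k ((1 : Fin 5), heis a b c * heis 0 1 0, u) (q', 1, []) at h
      rw [heis_mul] at h
      obtain ⟨p, q, r, i, rfl, ha, hc, h₀, h₁, h₂, h₃⟩ := ih h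
      obtain rfl := h₀ (by decide)
      refine ⟨0, q + 1, r, i, rfl, ?_, ?_, by simp, ?_, ?_, ?_⟩
      · push_cast at *; linarith
      · push_cast at *; linarith
      all_goals exact fun h => absurd (h.trans_le hs) (by decide)
    · change multAutomaton.StepsIn k ((2 : Fin 5), heis a b c * heis 0 0 (-1), u) (q', 1, []) at h
      rw [heis_mul] at h
      obtain ⟨p, q, r, i, rfl, ha, hc, h₀, h₁, h₂, h₃⟩ := ih h
      obtain rfl := h₀ (by decide)
      obtain rfl := h₁ (by decide)
      refine ⟨0, 0, r + 1, i, rfl, ?_, ?_, by simp, by simp, ?_, ?_⟩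
      · push_cast at *; linarith
      · push_cast at *; linarith
      all_goals exact fun h => absurd (h.trans_le hs) (by decide)
    · change multAutomaton.StepsIn k ((3 : Fin 5), heis a b c * heis (-1) 0 0, u) (q', 1, []) at h
      rw [heis_mul] at h
      obtain ⟨p, q, r, i, rfl, ha, hc, h₀, h₁, h₂, h₃⟩ := ih h
      obtain rfl := h₀ (by decide)
      obtain rfl := h₁ (by decide)
      obtain rfl := h₂ (by decide)
      refine ⟨0, 0, 0, i + 1, rfl, ?_, ?_, by simp, by simp, by simp, ?_⟩
      · push_cast at *; linarith
      · push_cast at *; linarith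
      · exact fun h => absurd (h.trans_le hs) (by decide)
    · change multAutomaton.StepsIn k ((4 : Fin 5), heis a b c * heis 0 (-1) 0, u) (q', 1, []) at h
      rw [heis_mul] at h
      obtain ⟨p, q, r, i, rfl, ha, hc, h₀, h₁, h₂, h₃⟩ := ih h
      obtain rfl := h₀ (by decide)
      obtain rfl := h₁ (by decide)
      obtain rfl := h₂ (by decide)
      obtain rfl := h₃ (by decide)
      refine ⟨0, 0, 0, 0, rfl, ?_, ?_, by simp, by simp, by simp, by simp⟩
      · push_cast at *; linarith
      · push_cast at *; linarith

end multAutomaton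

theorem MULT_recognizable_heisenberg : GRecognizable Heisenberg MULT := by
  refine ⟨multAutomaton, ?_⟩
  ext w
  rw [multAutomaton.mem_lang_iff, ← heis_zero]
  constructor
  · intro h
    obtain ⟨p, q, r, i, rfl, -, hr, -⟩ := multAutomaton.exists_of_accepts h
    obtain rfl : p * q = r := by
      zify
      linarith
    exact ⟨p, q, rfl⟩
  · rintro ⟨p, q, rfl⟩
    simpa using multAutomaton.accepts_read_x 0 p q

/-- `𝔏(ℤ²) ⊊ 𝔏(H)` where `H` is the discrete Heisenberg group.
(The additive group `ℤ²` is rendered multiplicatively as `Multiplicative (ℤ × ℤ)`.) -/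
theorem Z2_lt_Heisenberg :
    (∀ (α : Type) [Fintype α] (L : Language α),
      GRecognizable (Multiplicative (ℤ × ℤ)) L → GRecognizable Heisenberg L) ∧
    GRecognizable Heisenberg MULT ∧
    ¬ GRecognizable (Multiplicative (ℤ × ℤ)) MULT := by
  refine ⟨?_, MULT_recognizable_heisenberg, fun h => not_isSemilinearSet_mul ?_⟩
  · rintro α _ L ⟨M, rfl⟩
    exact ⟨M.mapRegister heisenbergEmbedding, M.lang_mapRegister heisenbergEmbedding_injective⟩
  · rw [← image_parikh_MULT]
    exact h.isSemilinearSet_image_parikh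
end

section
/- The unary language L = { a^{2^{2n+1}} : n ≥ 0 } is recognized by an SL(2,ℚ)-automaton, and consequently 𝔏(SL(2,ℤ)) is a proper subset of 𝔏(SL(2,ℚ)). -/
/-- The unary language `{ a^(2^(2n+1)) : n ≥ 0 }`. -/
def LoddPow : Language (Fin 1) :=
  {w | ∃ n : ℕ, w = List.replicate (2 ^ (2 * n + 1)) 0}

open Matrix

/-- Matrices in `SL(2,ℤ)` all of whose entries have absolute value at most one. -/
def smallElements : Set (SpecialLinearGroup (Fin 2) ℤ) := {g | ∀ i j, |g i j| ≤ 1}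

/-- The generators `S`, `T` of `SL(2,ℤ)`, their inverses and the identity. -/
def modularGenerators : Set (SpecialLinearGroup (Fin 2) ℤ) :=
  {1, ModularGroup.S, ModularGroup.S⁻¹, ModularGroup.T, ModularGroup.T⁻¹}

/-- Matrices both of whose columns, read as points of the projective line, lie on one side
(`e = 1`: nonnegative, `e = -1`: nonpositive) of the Farey edge from `0` to `∞`. -/
def fareySide (e : ℤ) : Set (SpecialLinearGroup (Fin 2) ℤ) :=
  {g | 0 ≤ e * (g 0 0 * g 1 0) ∧ 0 ≤ e * (g 0 1 * g 1 1)}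

/-- Matrices whose columns are the two end points of the Farey edge from `0` to `∞`. -/
def fareyWall : Set (SpecialLinearGroup (Fin 2) ℤ) :=
  {g | g 0 0 * g 1 0 = 0 ∧ g 0 1 * g 1 1 = 0}

theorem smallElements_finite : smallElements.Finite := by
  refine Set.Finite.of_finite_image (f := fun g : SpecialLinearGroup (Fin 2) ℤ => g.1) ?_
    Subtype.val_injective.injOn
  refine Set.Finite.subset (Set.Finite.pi' fun _ : Fin 2 => Set.Finite.pi' fun _ : Fin 2 =>
    Set.finite_Icc (-1 : ℤ) 1) ?_
  rintro _ ⟨g, hg, rfl⟩ i j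
  exact abs_le.mp (hg i j)

theorem mem_smallElements_iff (g : SpecialLinearGroup (Fin 2) ℤ) : g ∈ smallElements ↔
    (|g 0 0| ≤ 1 ∧ |g 0 1| ≤ 1) ∧ (|g 1 0| ≤ 1 ∧ |g 1 1| ≤ 1) := by
  simp [smallElements, Fin.forall_fin_two]

theorem det_entries (g : SpecialLinearGroup (Fin 2) ℤ) :
    g 0 0 * g 1 1 - g 0 1 * g 1 0 = 1 := by
  rw [← Matrix.det_fin_two]; exact g.2

theorem mem_fareySide_or (g : SpecialLinearGroup (Fin 2) ℤ) :
    g ∈ fareySide 1 ∨ g ∈ fareySide (-1) := by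
  have h := det_entries g
  simp only [fareySide, Set.mem_ofPred_eq]
  generalize g 0 0 = a at *
  generalize g 0 1 = b at *
  generalize g 1 0 = c at *
  generalize g 1 1 = d at *
  have key : 0 ≤ (a * c) * (b * d) := by
    have : (a * c) * (b * d) = (b * c) * (b * c + 1) := by
      linear_combination (b * c) * h
    rw [this]
    rcases le_or_gt 0 (b * c) with h0 | h0
    · positivity
    · nlinarith
  rcases mul_nonneg_iff.mp key with h | h
  · left; constructor <;> linarith
  · right; constructor <;> linarith

theorem fareyWall_cases {k : SpecialLinearGroup (Fin 2) ℤ} (hk : k ∈ fareyWall) :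
    (k 0 0 = 0 ∧ k 1 1 = 0 ∧ (k 0 1 = 1 ∧ k 1 0 = -1 ∨ k 0 1 = -1 ∧ k 1 0 = 1)) ∨
    (k 0 1 = 0 ∧ k 1 0 = 0 ∧ (k 0 0 = 1 ∧ k 1 1 = 1 ∨ k 0 0 = -1 ∧ k 1 1 = -1)) := by
  have h := det_entries k
  obtain ⟨h1, h2⟩ := hk
  generalize k 0 0 = a at *
  generalize k 0 1 = b at *
  generalize k 1 0 = c at *
  generalize k 1 1 = d at *
  rcases mul_eq_zero.mp h1 with rfl | rfl
  · have : b * -c = 1 := by linarith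
    rcases Int.mul_eq_one_iff_eq_one_or_neg_one.mp this with h | h <;> grind
  · have : a * d = 1 := by linarith
    rcases Int.mul_eq_one_iff_eq_one_or_neg_one.mp this with h | h <;> grind

theorem fareyWall_subset_smallElements : fareyWall ⊆ smallElements := by
  intro k hk
  rw [mem_smallElements_iff]
  rcases fareyWall_cases hk with ⟨h1, h2, ⟨h3, h4⟩ | ⟨h3, h4⟩⟩ | ⟨h1, h2, ⟨h3, h4⟩ | ⟨h3, h4⟩⟩ <;>
    simp [h1, h2, h3, h4]

theorem inv_mul_mem_smallElements {k g : SpecialLinearGroup (Fin 2) ℤ} (hk : k ∈ fareyWall)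
    (hg : g ∈ smallElements) : k⁻¹ * g ∈ smallElements := by
  rw [mem_smallElements_iff] at *
  rcases fareyWall_cases hk with ⟨h1, h2, ⟨h3, h4⟩ | ⟨h3, h4⟩⟩ | ⟨h1, h2, ⟨h3, h4⟩ | ⟨h3, h4⟩⟩ <;>
    simp [Matrix.mul_apply, Matrix.adjugate_fin_two, h1, h2, h3, h4] <;>
    tauto

theorem abs_sub_le_one_of_mul_nonneg {a c : ℤ} (ha : |a| ≤ 1) (hc : |c| ≤ 1) (h : 0 ≤ a * c) :
    |a - c| ≤ 1 := by
  rw [abs_le] at *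
  constructor
  · by_contra! hlt
    have : a = -1 := by omega
    have : c = 1 := by omega
    subst a c
    omega
  · by_contra! hlt
    have : a = 1 := by omega
    have : c = -1 := by omega
    subst a c
    omega

theorem eq_zero_of_det_of_mul_neg {a b c d : ℤ} (h : a * d - b * c = 1) (hac : 0 ≤ a * c)
    (hbd : 0 ≤ b * d) (hneg : (a + b) * (c + d) < 0) : a * c = 0 ∧ b * d = 0 := by
  obtain ⟨u, hu⟩ : ∃ u, u = a * c := ⟨_, rfl⟩
  obtain ⟨v, hv⟩ : ∃ v, v = b * d := ⟨_, rfl⟩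
  obtain ⟨x, hx⟩ : ∃ x, x = b * c := ⟨_, rfl⟩
  have hprod : u * v = x * (x + 1) := by
    rw [hu, hv, hx]; linear_combination (b * c) * h
  have hsum : u + v + 2 * x + 2 ≤ 0 := by
    have : (a + b) * (c + d) = u + v + 2 * x + 1 := by
      rw [hu, hv, hx]; linear_combination h
    omega
  have hu0 : 0 ≤ u := hu ▸ hac
  have hv0 : 0 ≤ v := hv ▸ hbd
  have hsq : (u + v) ^ 2 ≤ (2 * x + 2) ^ 2 := by
    rw [sq_le_sq, abs_of_nonneg (by omega), abs_of_nonpos (by omega)]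
    omega
  have hx1 : -1 ≤ x := by nlinarith [sq_nonneg (u - v)]
  omega

theorem eq_zero_of_det_of_crossing {a b c d e : ℤ} (he : e = 1 ∨ e = -1)
    (h : a * d - b * c = 1) (hac : 0 ≤ e * (a * c)) (hbd : 0 ≤ e * (b * d))
    (hneg : e * ((a + b) * (c + d)) < 0) : a * c = 0 ∧ b * d = 0 := by
  rcases he with rfl | rfl
  · exact eq_zero_of_det_of_mul_neg h (by linarith) (by linarith) (by linarith)
  · have := eq_zero_of_det_of_mul_neg (a := c) (b := d) (c := -a) (d := -b)
      (by linarith) (by linarith) (by linarith) (by linarith)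
    constructor <;> linarith

theorem T_inv_mul_mem_smallElements {g : SpecialLinearGroup (Fin 2) ℤ} (hg : g ∈ smallElements)
    (h : g ∈ fareySide 1) : ModularGroup.T⁻¹ * g ∈ smallElements := by
  rw [mem_smallElements_iff] at *
  obtain ⟨h1, h2⟩ := h
  simp only [one_mul] at h1 h2
  simpa [Matrix.mul_apply, Fin.sum_univ_two, Matrix.adjugate_fin_two, ModularGroup.coe_T,
    ← sub_eq_add_neg, hg.2] using
    And.intro (abs_sub_le_one_of_mul_nonneg hg.1.1 hg.2.1 h1)
      (abs_sub_le_one_of_mul_nonneg hg.1.2 hg.2.2 h2)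

theorem T_mul_mem_smallElements {g : SpecialLinearGroup (Fin 2) ℤ} (hg : g ∈ smallElements)
    (h : g ∈ fareySide (-1)) : ModularGroup.T * g ∈ smallElements := by
  rw [mem_smallElements_iff] at *
  obtain ⟨h1, h2⟩ := h
  have hneg : ∀ x : ℤ, |x| ≤ 1 → |-x| ≤ 1 := fun x hx => (abs_neg x).symm ▸ hx
  simpa [Matrix.mul_apply, Fin.sum_univ_two, ModularGroup.coe_T, hg.2] using
    And.intro (abs_sub_le_one_of_mul_nonneg hg.1.1 (hneg _ hg.2.1) (by linarith))
      (abs_sub_le_one_of_mul_nonneg hg.1.2 (hneg _ hg.2.2) (by linarith))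

theorem mem_fareyWall_of_crossing {e : ℤ} (he : e = 1 ∨ e = -1)
    {h s : SpecialLinearGroup (Fin 2) ℤ} (hs : s ∈ modularGenerators) (hh : h ∈ fareySide e)
    (hhs : h * s ∉ fareySide e) : h ∈ fareyWall := by
  have hd := det_entries h
  obtain ⟨h1, h2⟩ := hh
  simp only [modularGenerators, Set.mem_insert_iff, Set.mem_singleton_iff] at hs
  rcases hs with rfl | rfl | rfl | rfl | rfl
  · exact absurd (show h ∈ fareySide e from ⟨h1, h2⟩) (by simpa using hhs)
  · refine absurd ?_ hhs
    simpa [fareySide, Matrix.mul_apply, Fin.sum_univ_two, ModularGroup.coe_S] using ⟨h2, h1⟩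
  · refine absurd ?_ hhs
    simpa [fareySide, Matrix.mul_apply, Fin.sum_univ_two, ModularGroup.coe_S,
      Matrix.adjugate_fin_two] using ⟨h2, h1⟩
  · have hlt : e * ((h 0 0 + h 0 1) * (h 1 0 + h 1 1)) < 0 := by
      simpa [fareySide, Matrix.mul_apply, Fin.sum_univ_two, ModularGroup.coe_T, h1] using hhs
    exact eq_zero_of_det_of_crossing he hd h1 h2 hlt
  · have hlt : e * ((-h 0 0 + h 0 1) * (-h 1 0 + h 1 1)) < 0 := by
      simpa [fareySide, Matrix.mul_apply, Fin.sum_univ_two, ModularGroup.coe_T,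
        Matrix.adjugate_fin_two, h1] using hhs
    have := eq_zero_of_det_of_crossing (a := h 0 1) (b := -h 0 0) (c := h 1 1) (d := -h 1 0) he
      (by linarith) h2 (by simpa using h1) (by linarith)
    exact ⟨by simpa using this.2, this.1⟩

/-- `WeightedRun E n p g q l`: a path of `n` edges of `E` from `p` to `q` whose labels multiply to
`g` and whose weights add up to `l`. -/
inductive WeightedRun {X G : Type*} [Monoid G] (E : X → ℕ → X → G → Prop) :
    ℕ → X → G → X → ℕ → Prop
  | nil (p : X) : WeightedRun E 0 p 1 p 0
  | cons {n p r q s g a l} : E p a r s → WeightedRun E n r g q l →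
      WeightedRun E (n + 1) p (s * g) q (a + l)

namespace WeightedRun

variable {X G : Type*} [Monoid G] {E : X → ℕ → X → G → Prop}

theorem append {n m p r q g h a b} (h₁ : WeightedRun E n p g r a) (h₂ : WeightedRun E m r h q b) :
    WeightedRun E (n + m) p (g * h) q (a + b) := by
  induction h₁ with
  | nil p => simpa using h₂
  | cons e _ ih =>
    have := cons e (ih h₂)
    rwa [← mul_assoc, ← add_assoc, add_right_comm] at this

theorem target_mem {F : Set X} (hF : ∀ p a r s, E p a r s → p ∈ F → r ∈ F) {n p g q l}
    (h : WeightedRun E n p g q l) (hp : p ∈ F) : q ∈ F := by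
  induction h with
  | nil p => exact hp
  | cons e _ ih => exact ih (hF _ _ _ _ e hp)

theorem weight_le (hE : ∀ p a r s, E p a r s → a ≤ 1) {n p g q l}
    (h : WeightedRun E n p g q l) : l ≤ n := by
  induction h with
  | nil p => exact le_rfl
  | cons e _ ih => have := hE _ _ _ _ e; omega

end WeightedRun

section Pumping

variable {ι : Type*} {N : Set ι} {R : ι → ℕ → ℕ → Prop}

/-- `R A n l` means that the symbol `A` derives a word of length `l` by a derivation of size `n`.
Every derivation of a word of length at least two from a symbol in `N` splits into two smaller ones,
as in a context-free grammar in Chomsky normal form. -/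
structure BinarySplitting (N : Set ι) (R : ι → ℕ → ℕ → Prop) : Prop where
  split : ∀ A ∈ N, ∀ n l, R A n l → 2 ≤ l → ∃ A₁ ∈ N, ∃ A₂ ∈ N, ∃ n₁ < n, ∃ n₂ < n, ∃ l₁ l₂,
    l = l₁ + l₂ ∧ R A₁ n₁ l₁ ∧ R A₂ n₂ l₂ ∧
      ∀ m₁ m₂, (∃ k, R A₁ k m₁) → (∃ k, R A₂ k m₂) → ∃ k, R A k (m₁ + m₂)

theorem BinarySplitting.exists_descendant (H : BinarySplitting N R) {t : ℕ} (ht : 1 ≤ t) (n : ℕ) :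
    ∀ A ∈ N, ∀ l, R A n l → t ≤ l → ∃ A' ∈ N, ∃ n' l' c, t ≤ l' ∧ l' < 2 * t ∧ l = l' + c ∧
      R A' n' l' ∧ ∀ m, (∃ k, R A' k m) → ∃ k, R A k (m + c) := by
  induction n using Nat.strong_induction_on with
  | _ n ih =>
    intro A hA l hl htl
    by_cases hlt : l < 2 * t
    · exact ⟨A, hA, n, l, 0, htl, hlt, rfl, hl, fun m hm => hm⟩
    obtain ⟨A₁, hA₁, A₂, hA₂, n₁, hn₁, n₂, hn₂, l₁, l₂, rfl, h₁, h₂, hc⟩ :=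
      H.split A hA n l hl (by omega)
    rcases le_or_gt t l₁ with h | h
    · obtain ⟨A', hA', n', l', c, h3, h4, rfl, h6, h7⟩ := ih n₁ hn₁ A₁ hA₁ l₁ h₁ h
      refine ⟨A', hA', n', l', c + l₂, h3, h4, by omega, h6, fun m hm => ?_⟩
      simpa [add_assoc] using hc _ _ (h7 m hm) ⟨_, h₂⟩
    · obtain ⟨A', hA', n', l', c, h3, h4, rfl, h6, h7⟩ := ih n₂ hn₂ A₂ hA₂ l₂ h₂ (by omega)
      refine ⟨A', hA', n', l', l₁ + c, h3, h4, by omega, h6, fun m hm => ?_⟩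
      simpa [add_left_comm] using hc _ _ ⟨_, h₁⟩ (h7 m hm)

theorem BinarySplitting.exists_chain (H : BinarySplitting N R) (k : ℕ) :
    ∀ A ∈ N, ∀ n l, R A n l → 2 ^ k ≤ l → ∃ (f : ℕ → ι) (w : ℕ → ℕ),
      (∀ j ≤ k, f j ∈ N ∧ 2 ^ j ≤ w j ∧ w j < 2 ^ (j + 1) ∧ w j ≤ l ∧ (∃ n, R (f j) n (w j)) ∧
        (∀ m, (∃ n, R (f j) n m) → ∃ n, R A n (m + (l - w j)))) ∧
      ∀ i j, i ≤ j → j ≤ k →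
        ∀ m, (∃ n, R (f i) n m) → ∃ n, R (f j) n (m + (w j - w i)) := by
  induction k with
  | zero =>
    intro A hA n l hl hk
    obtain ⟨A', hA', n', l', c, h3, h4, rfl, h6, h7⟩ := H.exists_descendant le_rfl n A hA l hl hk
    refine ⟨fun _ => A', fun _ => l', fun j hj => ?_, fun i j _ _ m hm => by simpa using hm⟩
    obtain rfl : j = 0 := by omega
    exact ⟨hA', by simpa using h3, by simpa using h4, Nat.le_add_right _ _, ⟨_, h6⟩,
      by simpa using h7⟩
  | succ k ih =>
    intro A hA n l hl hk
    obtain ⟨A', hA', n', l', c, h3, h4, rfl, h6, h7⟩ :=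
      H.exists_descendant Nat.one_le_two_pow n A hA l hl hk
    obtain ⟨f, w, hf, hfw⟩ := ih A' hA' n' l' h6
      ((Nat.pow_le_pow_right (by norm_num) (by omega)).trans h3)
    refine ⟨Function.update f (k + 1) A', Function.update w (k + 1) l', fun j hj => ?_,
      fun i j hij hj m hm => ?_⟩
    · rcases Nat.lt_or_ge k j with hkj | hkj
      · obtain rfl : j = k + 1 := by omega
        simp only [Function.update_self]
        refine ⟨hA', h3, by rw [pow_succ]; omega, by omega, ⟨_, h6⟩, by simpa using h7⟩
      · have hne : j ≠ k + 1 := by omega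
        simp only [Function.update_of_ne hne]
        obtain ⟨a1, a2, a3, a4, a5, a6⟩ := hf j hkj
        refine ⟨a1, a2, a3, by omega, a5, fun m hm => ?_⟩
        have := h7 _ (a6 m hm)
        rwa [show m + (l' - w j) + c = m + (l' + c - w j) by omega] at this
    · rcases Nat.lt_or_ge k j with hkj | hkj
      · obtain rfl : j = k + 1 := by omega
        rcases Nat.lt_or_ge k i with hki | hki
        · obtain rfl : i = k + 1 := by omega
          simpa using hm
        · have hne : i ≠ k + 1 := by omega
          simp only [Function.update_self, Function.update_of_ne hne] at hm ⊢
          exact (hf i hki).2.2.2.2.2 m hm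
      · have hne : i ≠ k + 1 := by omega
        have hne' : j ≠ k + 1 := by omega
        simp only [Function.update_of_ne hne, Function.update_of_ne hne'] at hm ⊢
        exact hfw i j hij hkj m hm

theorem BinarySplitting.pumping (H : BinarySplitting N R) (hN : N.Finite) :
    ∃ K, ∀ A ∈ N, ∀ n l, R A n l → K ≤ l → ∃ c, 0 < c ∧ ∀ m, ∃ n, R A n (l + m * c) := by
  refine ⟨2 ^ N.ncard, fun A hA n l hl hK => ?_⟩
  obtain ⟨f, w, hf, hfw⟩ := H.exists_chain _ A hA n l hl hK
  obtain ⟨i, hi, j, hj, hne, hij⟩ : ∃ i ∈ Finset.range (N.ncard + 1),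
      ∃ j ∈ Finset.range (N.ncard + 1), i ≠ j ∧ f i = f j := by
    refine Finset.exists_ne_map_eq_of_card_lt_of_maps_to (t := hN.toFinset) ?_ ?_
    · rw [← Set.ncard_eq_toFinset_card N hN]; simp
    · intro i hi
      simpa using (hf i (by simpa [Nat.lt_succ_iff] using hi)).1
  wlog hlt : i < j generalizing i j
  · exact this j hj i hi hne.symm hij.symm (by omega)
  have hj' : j ≤ N.ncard := by simpa [Nat.lt_succ_iff] using hj
  have hi' : i ≤ N.ncard := by omega
  obtain ⟨-, h1, -, h3, h4, h5⟩ := hf j hj'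
  have h6 := (hf i hi').2.2.1
  have h7 : 2 ^ (i + 1) ≤ 2 ^ j := Nat.pow_le_pow_right (by norm_num) hlt
  refine ⟨w j - w i, by omega, fun m => ?_⟩
  have key : ∃ n, R (f j) n (w j + m * (w j - w i)) := by
    induction m with
    | zero => simpa using h4
    | succ m ihm =>
      have := hfw i j hlt.le hj' _ (hij ▸ ihm)
      rwa [add_assoc, ← Nat.succ_mul] at this
  have := h5 _ key
  rwa [show w j + m * (w j - w i) + (l - w j) = l + m * (w j - w i) by omega] at this

end Pumping

section ModularRuns

variable {X : Type*} {E : X → ℕ → X → SpecialLinearGroup (Fin 2) ℤ → Prop}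

theorem mem_fareyWall_of_mem_sides {e : ℤ} (he : e = 1 ∨ e = -1)
    {h : SpecialLinearGroup (Fin 2) ℤ} (h₁ : h ∈ fareySide e) (h₂ : h ∈ fareySide (-e)) :
    h ∈ fareyWall := by
  obtain ⟨h1, h2⟩ := h₁
  obtain ⟨h3, h4⟩ := h₂
  rcases he with rfl | rfl <;> constructor <;> linarith

theorem WeightedRun.exists_split_fareyWall (hE : ∀ p a r s, E p a r s → s ∈ modularGenerators)
    {e : ℤ} (he : e = 1 ∨ e = -1) {n p g q l} (H : WeightedRun E n p g q l) :
    ∀ h, h ∈ fareySide e → h * g ∈ fareySide (-e) →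
      ∃ n₁ n₂ g₁ g₂ l₁ l₂ r, n = n₁ + n₂ ∧ g = g₁ * g₂ ∧ l = l₁ + l₂ ∧
        WeightedRun E n₁ p g₁ r l₁ ∧ WeightedRun E n₂ r g₂ q l₂ ∧ h * g₁ ∈ fareyWall := by
  induction H with
  | nil p =>
    intro h h₁ h₂
    rw [mul_one] at h₂
    exact ⟨0, 0, 1, 1, 0, 0, p, rfl, (mul_one 1).symm, rfl, .nil p, .nil p,
      by simpa using mem_fareyWall_of_mem_sides he h₁ h₂⟩
  | @cons n p r q s g a l hs H ih =>
    intro h h₁ h₂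
    by_cases hhs : h * s ∈ fareySide e
    · obtain ⟨n₁, n₂, g₁, g₂, l₁, l₂, r', rfl, rfl, rfl, H₁, H₂, hw⟩ :=
        ih (h * s) hhs (by rwa [mul_assoc])
      exact ⟨n₁ + 1, n₂, s * g₁, g₂, a + l₁, l₂, r', by omega, (mul_assoc _ _ _).symm, by omega,
        .cons hs H₁, H₂, by rwa [← mul_assoc]⟩
    · exact ⟨0, n + 1, 1, s * g, 0, a + l, p, by omega, (one_mul _).symm, by omega, .nil p,
        .cons hs H, by simpa using mem_fareyWall_of_crossing he (hE _ _ _ _ hs) h₁ hhs⟩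

theorem modularGenerators_subset_smallElements : modularGenerators ⊆ smallElements := by
  intro s hs
  rw [mem_smallElements_iff]
  simp only [modularGenerators, Set.mem_insert_iff, Set.mem_singleton_iff] at hs
  rcases hs with rfl | rfl | rfl | rfl | rfl <;>
    simp [ModularGroup.coe_S, ModularGroup.coe_T, Matrix.adjugate_fin_two]

/-- Either `s⁻¹ * g` is small again, or a path from `s` to `g` has to cross the Farey wall. -/
theorem first_step_cases {s g : SpecialLinearGroup (Fin 2) ℤ} (hs : s ∈ modularGenerators)
    (hg : g ∈ smallElements) : s⁻¹ * g ∈ smallElements ∨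
      ∃ e : ℤ, (e = 1 ∨ e = -1) ∧ s ∈ fareySide e ∧ g ∈ fareySide (-e) ∧ g ∉ fareyWall := by
  have wall_side : ∀ e : ℤ, ∀ k ∈ fareyWall, k ∈ fareySide e := by
    rintro e k ⟨h1, h2⟩
    exact ⟨by rw [h1, mul_zero], by rw [h2, mul_zero]⟩
  simp only [modularGenerators, Set.mem_insert_iff, Set.mem_singleton_iff] at hs
  rcases hs with rfl | rfl | rfl | rfl | rfl
  · left; simpa using hg
  · left
    exact inv_mul_mem_smallElements (by simp [fareyWall, ModularGroup.coe_S]) hg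
  · left
    exact inv_mul_mem_smallElements
      (by simp [fareyWall, ModularGroup.coe_S, Matrix.adjugate_fin_two]) hg
  · by_cases h : g ∈ fareySide 1
    · exact .inl (T_inv_mul_mem_smallElements hg h)
    · exact .inr ⟨1, .inl rfl, by simp [fareySide, ModularGroup.coe_T],
        (mem_fareySide_or g).resolve_left h, fun hw => h (wall_side 1 g hw)⟩
  · by_cases h : g ∈ fareySide (-1)
    · rw [inv_inv]
      exact .inl (T_mul_mem_smallElements hg h)
    · exact .inr ⟨-1, .inr rfl, by simp [fareySide, ModularGroup.coe_T, Matrix.adjugate_fin_two],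
        by simpa using (mem_fareySide_or g).resolve_right h, fun hw => h (wall_side (-1) g hw)⟩

theorem WeightedRun.exists_split_smallElements
    (hE : ∀ p a r s, E p a r s → s ∈ modularGenerators) {n p g q l}
    (H : WeightedRun E n p g q l) (hn : 2 ≤ n) (hg : g ∈ smallElements) :
    ∃ n₁ < n, ∃ n₂ < n, ∃ g₁ ∈ smallElements, ∃ g₂ ∈ smallElements, ∃ l₁ l₂ r,
      g = g₁ * g₂ ∧ l = l₁ + l₂ ∧ WeightedRun E n₁ p g₁ r l₁ ∧ WeightedRun E n₂ r g₂ q l₂ := by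
  cases H with
  | nil => omega
  | @cons n _ r _ s g a l hs H =>
    have hs' := hE _ _ _ _ hs
    rcases first_step_cases hs' hg with h | ⟨e, he, h₁, h₂, h₃⟩
    · rw [inv_mul_cancel_left] at h
      have H₁ := WeightedRun.cons hs (.nil r)
      rw [mul_one] at H₁
      exact ⟨1, by omega, n, by omega, s, modularGenerators_subset_smallElements hs', g, h,
        _, l, r, rfl, rfl, H₁, H⟩
    · obtain ⟨n₁, n₂, g₁, g₂, l₁, l₂, r', rfl, rfl, rfl, H₁, H₂, hw⟩ :=
        H.exists_split_fareyWall hE he s h₁ h₂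
      have hn₂ : n₂ ≠ 0 := by
        rintro rfl
        cases H₂
        exact h₃ (by simpa using hw)
      refine ⟨n₁ + 1, by omega, n₂, by omega, s * g₁, fareyWall_subset_smallElements hw, g₂, ?_,
        a + l₁, l₂, r', (mul_assoc _ _ _).symm, by omega, .cons hs H₁, H₂⟩
      have := inv_mul_mem_smallElements hw hg
      rwa [← mul_assoc s, inv_mul_cancel_left] at this

theorem WeightedRun.pumping {F : Set X} (hF : F.Finite)
    (hEF : ∀ p a r s, E p a r s → p ∈ F → r ∈ F)
    (hE : ∀ p a r s, E p a r s → a ≤ 1 ∧ s ∈ modularGenerators) :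
    ∃ K, ∀ n, ∀ p ∈ F, ∀ q l, WeightedRun E n p 1 q l → K ≤ l →
      ∃ c, 0 < c ∧ ∀ m, ∃ n, WeightedRun E n p 1 q (l + m * c) := by
  have H : BinarySplitting (F ×ˢ smallElements ×ˢ F)
      fun A n l => WeightedRun E n A.1 A.2.1 A.2.2 l := by
    constructor
    rintro ⟨p, g, q⟩ ⟨hp, hg, hq⟩ n l h hl
    have hln := h.weight_le fun p a r s hs => (hE p a r s hs).1
    obtain ⟨n₁, hn₁, n₂, hn₂, g₁, hg₁, g₂, hg₂, l₁, l₂, r, rfl, rfl, H₁, H₂⟩ :=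
      h.exists_split_smallElements (fun p a r s hs => (hE p a r s hs).2) (by omega) hg
    have hr := H₁.target_mem hEF hp
    refine ⟨(p, g₁, r), ⟨hp, hg₁, hr⟩, (r, g₂, q), ⟨hr, hg₂, hq⟩, n₁, hn₁, n₂, hn₂, l₁, l₂, rfl,
      H₁, H₂, ?_⟩
    rintro m₁ m₂ ⟨k₁, h₁⟩ ⟨k₂, h₂⟩
    exact ⟨_, h₁.append h₂⟩
  obtain ⟨K, hK⟩ := H.pumping (hF.prod (smallElements_finite.prod hF))
  refine ⟨K, fun n p hp q l h hl => hK (p, 1, q) ⟨hp, ?_, h.target_mem hEF hp⟩ n l h hl⟩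
  exact modularGenerators_subset_smallElements (by simp [modularGenerators])

end ModularRuns

theorem exists_modularGenerators_word (g : SpecialLinearGroup (Fin 2) ℤ) :
    ∃ l : List (SpecialLinearGroup (Fin 2) ℤ), (∀ s ∈ l, s ∈ modularGenerators) ∧ l.prod = g := by
  have h : g ∈ (Subgroup.closure {ModularGroup.S, ModularGroup.T}).toSubmonoid := by
    rw [SpecialLinearGroup.SL2Z_generators]; trivial
  rw [Subgroup.closure_toSubmonoid] at h
  obtain ⟨l, hl, hg⟩ := Submonoid.exists_list_of_mem_closure h
  refine ⟨l, fun s hs => ?_, hg⟩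
  have := hl s hs
  simp only [Set.mem_union, Set.mem_inv, Set.mem_insert_iff, Set.mem_singleton_iff,
    inv_eq_iff_eq_inv] at this
  simp only [modularGenerators, Set.mem_insert_iff, Set.mem_singleton_iff]
  tauto

section Refinement

variable {G α : Type*} [Group G]

/-- The refinement of a `G`-automaton in which a transition with register element `m` is followed
by the letters of `word m`, one at a time, the letters still to be multiplied being recorded in
the state. -/
inductive GAutomaton.RefinedEdge (M : GAutomaton α G) (word : G → List G) (Γ : Set G) :
    M.Q × List G → ℕ → M.Q × List G → G → Prop
  | read {q σ q' m} : (q, σ, q', m) ∈ M.δ →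
      RefinedEdge M word Γ (q, []) σ.toList.length (q', word m) 1
  | multiply {q s l} : s ∈ Γ → RefinedEdge M word Γ (q, s :: l) 0 (q, l) s

theorem GAutomaton.weightedRun_word (M : GAutomaton α G) {word : G → List G} {Γ : Set G} (q : M.Q)
    (l : List G) (hl : ∀ s ∈ l, s ∈ Γ) :
    ∃ n, WeightedRun (M.RefinedEdge word Γ) n (q, l) l.prod (q, []) 0 := by
  induction l with
  | nil => exact ⟨0, .nil _⟩
  | cons s l ih =>
    obtain ⟨n, hn⟩ := ih fun t ht => hl t (List.mem_cons_of_mem _ ht)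
    rw [List.prod_cons]
    exact ⟨n + 1, .cons (.multiply (hl s List.mem_cons_self)) hn⟩

theorem GAutomaton.StepsIn.weightedRun {M : GAutomaton α G} {word : G → List G} {Γ : Set G}
    (hΓ : ∀ g, ∀ s ∈ word g, s ∈ Γ) (hword : ∀ g, (word g).prod = g) {k : ℕ} :
    ∀ {c c' : M.Q × G × List α}, M.StepsIn k c c' → ∃ n g l,
      WeightedRun (M.RefinedEdge word Γ) n (c.1, []) g (c'.1, []) l ∧ c'.2.1 = c.2.1 * g ∧
        c.2.2.length = l + c'.2.2.length := by
  induction k with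
  | zero =>
    rintro c _ rfl
    exact ⟨0, 1, 0, .nil _, by simp, by simp⟩
  | succ k ih =>
    rintro c c' ⟨d, ⟨σ, m, hδ, hm, hσ⟩, hd⟩
    obtain ⟨n, g, l, H, hg, hl⟩ := ih hd
    obtain ⟨n', H'⟩ := M.weightedRun_word (word := word) d.1 (word m) (hΓ m)
    refine ⟨_, _, _, .cons (.read hδ) (H'.append H), ?_, ?_⟩
    · rw [hg, hm, hword, one_mul, mul_assoc]
    · cases σ with
      | none => simp_all
      | some s => simp [hσ, hl]; omega

theorem GAutomaton.exists_stepsIn_of_weightedRun {M : GAutomaton (Fin 1) G} {word : G → List G}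
    {Γ : Set G} (hword : ∀ g, (word g).prod = g) {n p g q l}
    (H : WeightedRun (M.RefinedEdge word Γ) n p g q l) (hq : q.2 = []) :
    ∃ k g', g = p.2.prod * g' ∧
      ∀ x, M.StepsIn k (p.1, x, List.replicate l 0) (q.1, x * g', []) := by
  induction H with
  | nil p => exact ⟨0, 1, by simp [hq], fun x => by simp [GAutomaton.StepsIn]⟩
  | @cons _ _ _ _ _ _ _ l e _ ih =>
    obtain ⟨k, g', rfl, h⟩ := ih hq
    cases e with
    | @read q₁ σ q₂ m hδ =>
      refine ⟨k + 1, m * g', by simp [hword], fun x =>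
        ⟨(q₂, x * m, List.replicate l 0), ⟨σ, m, hδ, rfl, ?_⟩, ?_⟩⟩
      swap
      · rw [← mul_assoc]; exact h (x * m)
      · cases σ with
        | none => simp
        | some s =>
          rw [Subsingleton.elim s 0]
          simp [Nat.add_comm 1, List.replicate_succ]
    | multiply hs =>
      exact ⟨k, g', by simp [mul_assoc], fun x => by simpa using h x⟩

end Refinement

theorem GAutomaton.pumping_SL2Z (M : GAutomaton (Fin 1) (SpecialLinearGroup (Fin 2) ℤ)) :
    ∃ K, ∀ l, K ≤ l → List.replicate l 0 ∈ M.lang →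
      ∃ c, 0 < c ∧ ∀ m, List.replicate (l + m * c) 0 ∈ M.lang := by
  choose word hΓ hword using exists_modularGenerators_word
  have := M.finQ
  let F : Set (M.Q × List (SpecialLinearGroup (Fin 2) ℤ)) :=
    Set.univ ×ˢ ({[]} ∪ ⋃ t ∈ M.δ, {l | l ∈ (word t.2.2.2).tails})
  have hF : F.Finite := Set.finite_univ.prod
    ((Set.finite_singleton _).union (M.finδ.biUnion fun t _ => List.finite_toSet _))
  obtain ⟨K, hK⟩ := WeightedRun.pumping (E := M.RefinedEdge word modularGenerators) hF
    (by
      intro p a r s e hp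
      refine ⟨trivial, ?_⟩
      cases e with
      | read hδ =>
        exact .inr (Set.mem_biUnion hδ (by simp))
      | @multiply q s l hs =>
        rcases hp.2 with h | h
        · simp at h
        · simp only [Set.mem_iUnion] at h
          obtain ⟨t, ht, h⟩ := h
          have h' : s :: l <:+ word t.2.2.2 := by simpa using h
          refine .inr (Set.mem_biUnion ht ?_)
          simpa using (List.suffix_cons s l).trans h')
    (by
      intro p a r s e
      cases e with
      | @read _ σ _ _ _ => exact ⟨by cases σ <;> simp, by simp [modularGenerators]⟩
      | multiply hs => exact ⟨zero_le, hs⟩)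
  refine ⟨K, fun l hl hmem => ?_⟩
  obtain ⟨t, k, -, q, hq, hk⟩ := hmem
  obtain ⟨n, g, l', H, hg, hl'⟩ := hk.weightedRun hΓ hword
  obtain rfl : 1 = g := by simpa using hg
  obtain rfl : l = l' := by simpa using hl'
  obtain ⟨c, hc, hpump⟩ := hK n (M.q0, []) ⟨trivial, .inl rfl⟩ _ _ H hl
  refine ⟨c, hc, fun m => ?_⟩
  obtain ⟨n', H'⟩ := hpump m
  obtain ⟨k', g', hg', hk'⟩ := GAutomaton.exists_stepsIn_of_weightedRun hword H' rfl
  obtain rfl : 1 = g' := by simpa using hg'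
  exact ⟨k', k', le_rfl, q, hq, by simpa using hk' 1⟩

theorem replicate_mem_LoddPow {l : ℕ} :
    List.replicate l 0 ∈ LoddPow ↔ ∃ n : ℕ, l = 2 ^ (2 * n + 1) := by
  constructor
  · rintro ⟨n, hn⟩
    exact ⟨n, by simpa using congrArg List.length hn⟩
  · rintro ⟨n, rfl⟩
    exact ⟨n, rfl⟩

theorem not_gRecognizable_SL2Z_LoddPow :
    ¬ GRecognizable (SpecialLinearGroup (Fin 2) ℤ) LoddPow := by
  rintro ⟨M, hM⟩
  obtain ⟨K, hK⟩ := M.pumping_SL2Z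
  rw [hM] at hK
  have hlt : K ≤ 2 ^ (2 * K + 1) :=
    (Nat.lt_two_pow_self).le.trans (Nat.pow_le_pow_right (by norm_num) (by omega))
  obtain ⟨c, hc, h⟩ := hK _ hlt (replicate_mem_LoddPow.mpr ⟨K, rfl⟩)
  obtain ⟨n, hn⟩ := replicate_mem_LoddPow.mp (h (2 * 2 ^ (2 * K + 1)))
  have hdvd : 2 * c + 1 ∣ 2 ^ (2 * n + 1) := ⟨2 ^ (2 * K + 1), by rw [← hn]; ring⟩
  have hcop : Nat.Coprime (2 * c + 1) (2 ^ (2 * n + 1)) :=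
    Nat.Coprime.pow_right _ (by simp)
  have := Nat.Coprime.eq_one_of_dvd hcop hdvd
  omega

section Map

variable {G H α : Type*} [Group G] [Group H]

/-- The `H`-automaton obtained by applying a homomorphism `G →* H` to the register elements. -/
def GAutomaton.map (M : GAutomaton α G) (φ : G →* H) : GAutomaton α H where
  Q := M.Q
  finQ := M.finQ
  q0 := M.q0
  acc := M.acc
  δ := (fun t => (t.1, t.2.1, t.2.2.1, φ t.2.2.2)) '' M.δ
  finδ := M.finδ.image _

theorem GAutomaton.stepsIn_map (M : GAutomaton α G) (φ : G →* H) {k : ℕ} :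
    ∀ {q q' : M.Q} {x : G} {y : H} {u u' : List α},
      (M.map φ).StepsIn k (q, φ x, u) (q', y, u') ↔
        ∃ x', φ x' = y ∧ M.StepsIn k (q, x, u) (q', x', u') := by
  induction k with
  | zero =>
    intro q q' x y u u'
    constructor
    · intro h
      obtain ⟨rfl, rfl, rfl⟩ := by simpa [GAutomaton.StepsIn] using h
      exact ⟨x, rfl, rfl⟩
    · rintro ⟨x', rfl, h⟩
      obtain ⟨rfl, rfl, rfl⟩ := by simpa [GAutomaton.StepsIn] using h
      rfl
  | succ k ih =>
    intro q q' x y u u'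
    constructor
    · rintro ⟨⟨r, z, v⟩, ⟨σ, m, ⟨⟨q₁, σ₁, r₁, m₁⟩, hδ, heq⟩, hm, hσ⟩, h⟩
      obtain ⟨rfl, rfl, rfl, rfl⟩ := by simpa using heq
      obtain rfl : z = φ (x * m₁) := by simpa using hm
      obtain ⟨x', hx', h'⟩ := ih.mp h
      exact ⟨x', hx', (r, x * m₁, v), ⟨σ, m₁, hδ, rfl, hσ⟩, h'⟩
    · rintro ⟨x', hx', ⟨r, z, v⟩, ⟨σ, m, hδ, hm, hσ⟩, h⟩
      exact ⟨(r, φ z, v), ⟨σ, φ m, ⟨_, hδ, rfl⟩, by simp_all, hσ⟩, ih.mpr ⟨x', hx', h⟩⟩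

theorem GRecognizable.of_injective {L : Language α} (h : GRecognizable G L) (φ : G →* H)
    (hφ : Function.Injective φ) : GRecognizable H L := by
  obtain ⟨M, rfl⟩ := h
  refine ⟨M.map φ, ?_⟩
  ext w
  have key (k : ℕ) (q : M.Q) : (M.map φ).StepsIn k (M.q0, 1, w) (q, 1, []) ↔
      M.StepsIn k (M.q0, 1, w) (q, 1, []) := by
    have := M.stepsIn_map φ (k := k) (q := M.q0) (q' := q) (x := 1) (y := 1) (u := w) (u' := [])
    rw [map_one] at this
    rw [this]
    constructor
    · rintro ⟨x', hx', h⟩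
      obtain rfl : x' = 1 := hφ (by rw [hx', map_one])
      exact h
    · exact fun h => ⟨1, map_one φ, h⟩
  constructor
  · rintro ⟨t, k, hk, q, hq, h⟩
    exact ⟨t, k, hk, q, hq, (key k q).mp h⟩
  · rintro ⟨t, k, hk, q, hq, h⟩
    exact ⟨t, k, hk, q, hq, (key k q).mpr h⟩

end Map

section UpperTriangular

/-- The upper triangular matrix with diagonal `(a, a⁻¹)` and upper right entry `b`. -/
def upperTriangular (a : ℚˣ) (b : ℚ) : SpecialLinearGroup (Fin 2) ℚ :=
  ⟨!![(a : ℚ), b; 0, ((a⁻¹ : ℚˣ) : ℚ)], by simp [Matrix.det_fin_two]⟩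

theorem upperTriangular_mul (a c : ℚˣ) (b d : ℚ) :
    upperTriangular a b * upperTriangular c d =
      upperTriangular (a * c) (a * d + b * ((c⁻¹ : ℚˣ) : ℚ)) := by
  apply Subtype.ext
  rw [Matrix.SpecialLinearGroup.coe_mul]
  simp [upperTriangular, mul_comm]

theorem upperTriangular_one_zero : upperTriangular 1 0 = 1 := by
  apply Subtype.ext
  simp [upperTriangular, Matrix.one_fin_two]

theorem upperTriangular_eq_one_iff {a : ℚˣ} {b : ℚ} : upperTriangular a b = 1 ↔ a = 1 ∧ b = 0 := by
  refine ⟨fun h => ?_, fun ⟨ha, hb⟩ => by rw [ha, hb, upperTriangular_one_zero]⟩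
  have h₁ := congrArg (fun g => g.1 0 0) h
  have h₂ := congrArg (fun g => g.1 0 1) h
  exact ⟨by simpa [upperTriangular] using h₁, by simpa [upperTriangular] using h₂⟩

theorem upperTriangular_zero_pow (a : ℚˣ) (n : ℕ) :
    upperTriangular a 0 ^ n = upperTriangular (a ^ n) 0 := by
  induction n with
  | zero => simp [upperTriangular_one_zero]
  | succ n ih => rw [pow_succ, ih, upperTriangular_mul]; simp [pow_succ]

theorem upperTriangular_one_pow (b : ℚ) (n : ℕ) :
    upperTriangular 1 b ^ n = upperTriangular 1 (n * b) := by
  induction n with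
  | zero => simp [upperTriangular_one_zero]
  | succ n ih =>
    rw [pow_succ, ih, upperTriangular_mul]
    congr 1
    · simp
    · push_cast; ring

end UpperTriangular

section Loops

variable {G α : Type*} [Group G] {M : GAutomaton α G}

theorem GAutomaton.StepsIn.trans {m n : ℕ} : ∀ {c d e : M.Q × G × List α},
    M.StepsIn m c d → M.StepsIn n d e → M.StepsIn (m + n) c e := by
  induction m with
  | zero =>
    rintro c _ e rfl h
    rwa [Nat.zero_add]
  | succ m ih =>
    rintro c d e ⟨c', hc, h⟩ h'
    rw [Nat.add_right_comm]
    exact ⟨c', hc, ih h h'⟩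

theorem GAutomaton.stepsIn_epsilon {q q' : M.Q} {m : G} (h : (q, none, q', m) ∈ M.δ) (x : G)
    (u : List α) : M.StepsIn 1 (q, x, u) (q', x * m, u) :=
  ⟨(q', x * m, u), ⟨none, m, h, rfl, rfl⟩, rfl⟩

theorem GAutomaton.stepsIn_epsilon_loop {q : M.Q} {m : G} (h : (q, none, q, m) ∈ M.δ) (x : G)
    (u : List α) (k : ℕ) : M.StepsIn k (q, x, u) (q, x * m ^ k, u) := by
  induction k with
  | zero => simp [GAutomaton.StepsIn]
  | succ k ih =>
    rw [pow_succ, ← mul_assoc]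
    exact ih.trans (GAutomaton.stepsIn_epsilon h _ u)

theorem GAutomaton.stepsIn_read_loop {q : M.Q} {a : α} {m : G} (h : (q, some a, q, m) ∈ M.δ)
    (k : ℕ) : ∀ x, M.StepsIn k (q, x, List.replicate k a) (q, x * m ^ k, []) := by
  induction k with
  | zero => simp [GAutomaton.StepsIn]
  | succ k ih =>
    intro x
    rw [pow_succ', ← mul_assoc]
    exact ⟨_, ⟨some a, m, h, rfl, rfl⟩, ih (x * m)⟩

theorem GAutomaton.StepsIn.invariant {I : M.Q × G × List α → Prop}
    (hI : ∀ c c', M.Step c c' → I c → I c') {k : ℕ} :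
    ∀ {c c' : M.Q × G × List α}, M.StepsIn k c c' → I c → I c' := by
  induction k with
  | zero =>
    rintro c _ rfl h
    exact h
  | succ k ih =>
    rintro c c' ⟨d, hd, h⟩ hc
    exact ih h (hI c d hd hc)

end Loops

section OddPowers

/-- The rational number two as a unit. -/
def ratTwo : ℚˣ := Units.mk0 2 two_ne_zero

/-- The transitions of `oddPowAutomaton`. -/
def oddPowTransitions : Set (Fin 3 × Option (Fin 1) × Fin 3 × SpecialLinearGroup (Fin 2) ℚ) :=
  {(0, none, 0, upperTriangular ratTwo 0), (0, none, 1, upperTriangular 1 2),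
    (1, none, 1, upperTriangular ratTwo⁻¹ 0), (1, none, 2, 1),
    (2, some 0, 2, upperTriangular 1 (-1))}

/-- Guess `n`, build the unipotent matrix with upper right entry `2 * 4 ^ n` as a conjugate by
the `n`-th power of a diagonal matrix, then count down while reading the input. -/
def oddPowAutomaton : GAutomaton (Fin 1) (SpecialLinearGroup (Fin 2) ℚ) where
  Q := Fin 3
  finQ := inferInstance
  q0 := 0
  acc := {2}
  δ := oddPowTransitions
  finδ := by unfold oddPowTransitions; exact Set.toFinite _

/-- The configurations that `oddPowAutomaton` can reach on input `w`. -/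
def oddPowInvariant (w : List (Fin 1)) :
    Fin 3 × SpecialLinearGroup (Fin 2) ℚ × List (Fin 1) → Prop
  | (0, g, u) => w = u ∧ ∃ i : ℕ, g = upperTriangular (ratTwo ^ i) 0
  | (1, g, u) => w = u ∧ ∃ i j : ℕ,
      g = upperTriangular (ratTwo ^ i * (ratTwo ^ j)⁻¹) (2 * 2 ^ i * 2 ^ j)
  | (2, g, u) => ∃ i j k : ℕ, w = List.replicate k 0 ++ u ∧
      g = upperTriangular (ratTwo ^ i * (ratTwo ^ j)⁻¹)
        (2 * 2 ^ i * 2 ^ j - k * (2 ^ i * (2 ^ j)⁻¹))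

theorem oddPowInvariant_step (w : List (Fin 1))
    (c c' : Fin 3 × SpecialLinearGroup (Fin 2) ℚ × List (Fin 1))
    (h : oddPowAutomaton.Step c c') (hc : oddPowInvariant w c) : oddPowInvariant w c' := by
  obtain ⟨q, g, u⟩ := c
  obtain ⟨q', g', u'⟩ := c'
  obtain ⟨σ, m, hδ, hm, hσ⟩ := h
  change (q, σ, q', m) ∈ oddPowTransitions at hδ
  simp only [oddPowTransitions, Set.mem_insert_iff, Set.mem_singleton_iff, Prod.mk.injEq] at hδ
  rcases hδ with ⟨rfl, rfl, rfl, rfl⟩ | ⟨rfl, rfl, rfl, rfl⟩ | ⟨rfl, rfl, rfl, rfl⟩ |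
    ⟨rfl, rfl, rfl, rfl⟩ | ⟨rfl, rfl, rfl, rfl⟩ <;> simp only at hm hσ <;> subst hm
  · obtain ⟨rfl, i, rfl⟩ := hc
    exact ⟨hσ.symm, i + 1, by rw [upperTriangular_mul]; simp [pow_succ]⟩
  · obtain ⟨rfl, i, rfl⟩ := hc
    exact ⟨hσ.symm, i, 0, by rw [upperTriangular_mul]; simp [ratTwo, mul_comm]⟩
  · obtain ⟨rfl, i, j, rfl⟩ := hc
    refine ⟨hσ.symm, i, j + 1, ?_⟩
    rw [upperTriangular_mul]
    congr 1
    · rw [pow_succ, mul_inv, mul_assoc]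
    · simp [ratTwo, pow_succ]; ring
  · obtain ⟨rfl, i, j, rfl⟩ := hc
    exact ⟨i, j, 0, by simp [hσ], by simp⟩
  · obtain ⟨i, j, k, rfl, rfl⟩ := hc
    refine ⟨i, j, k + 1, by simp [hσ, List.replicate_succ'], ?_⟩
    rw [upperTriangular_mul]
    congr 1
    · simp
    · simp [ratTwo]; ring

theorem oddPowAutomaton_accepts (n : ℕ) :
    List.replicate (2 ^ (2 * n + 1)) 0 ∈ oddPowAutomaton.lang := by
  have h₁ := GAutomaton.stepsIn_epsilon_loop (M := oddPowAutomaton) (q := (0 : Fin 3))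
    (m := upperTriangular ratTwo 0) (.inl rfl) 1
    (List.replicate (2 ^ (2 * n + 1)) 0) n
  have h₂ := h₁.trans (GAutomaton.stepsIn_epsilon (M := oddPowAutomaton) (q' := (1 : Fin 3))
    (m := upperTriangular 1 2) (.inr (.inl rfl)) _ _)
  have h₃ := h₂.trans (GAutomaton.stepsIn_epsilon_loop (M := oddPowAutomaton) (q := (1 : Fin 3))
    (m := upperTriangular ratTwo⁻¹ 0) (.inr (.inr (.inl rfl))) _ _ n)
  have h₄ := h₃.trans (GAutomaton.stepsIn_epsilon (M := oddPowAutomaton) (q' := (2 : Fin 3))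
    (m := 1) (.inr (.inr (.inr (.inl rfl)))) _ _)
  have h₅ := h₄.trans (GAutomaton.stepsIn_read_loop (M := oddPowAutomaton) (q := (2 : Fin 3))
    (m := upperTriangular 1 (-1)) (.inr (.inr (.inr (.inr rfl)))) _ _)
  have hprod : 1 * upperTriangular ratTwo 0 ^ n * upperTriangular 1 2 *
      upperTriangular ratTwo⁻¹ 0 ^ n * 1 * upperTriangular 1 (-1) ^ 2 ^ (2 * n + 1) = 1 := by
    simp only [upperTriangular_zero_pow, upperTriangular_one_pow, one_mul, mul_one,
      upperTriangular_mul, upperTriangular_eq_one_iff]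
    refine ⟨by simp, ?_⟩
    simp [ratTwo]
    ring
  rw [hprod] at h₅
  exact ⟨_, _, le_rfl, (2 : Fin 3), rfl, h₅⟩

theorem gRecognizable_SL2Q_LoddPow : GRecognizable (SpecialLinearGroup (Fin 2) ℚ) LoddPow := by
  refine ⟨oddPowAutomaton, ?_⟩
  ext w
  constructor
  · rintro ⟨t, k, -, q, hq, h⟩
    obtain rfl : q = (2 : Fin 3) := hq
    obtain ⟨i, j, k, rfl, h₁⟩ := h.invariant (oddPowInvariant_step w)
      ⟨rfl, 0, by simp [upperTriangular_one_zero]⟩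
    obtain ⟨ha, hb⟩ := upperTriangular_eq_one_iff.mp h₁.symm
    have hij : (2 : ℚ) ^ i = 2 ^ j := by
      simpa [ratTwo] using congrArg Units.val (mul_inv_eq_one.mp ha)
    rw [hij, mul_inv_cancel₀ (by positivity), mul_one, sub_eq_zero] at hb
    refine ⟨j, ?_⟩
    have hk : k = 2 ^ (2 * j + 1) := by
      have : (k : ℚ) = 2 ^ (2 * j + 1) := by rw [← hb]; ring
      exact_mod_cast this
    rw [List.append_nil, hk]
  · rintro ⟨n, rfl⟩
    exact oddPowAutomaton_accepts n

end OddPowers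

/-- `{ a^(2^(2n+1)) }` is recognized by an `SL(2,ℚ)`-automaton, and
consequently `𝔏(SL(2,ℤ)) ⊊ 𝔏(SL(2,ℚ))`. -/
theorem SL2Z_lt_SL2Q :
    GRecognizable (Matrix.SpecialLinearGroup (Fin 2) ℚ) LoddPow ∧
    (∀ (α : Type) [Fintype α] (L : Language α),
      GRecognizable (Matrix.SpecialLinearGroup (Fin 2) ℤ) L →
        GRecognizable (Matrix.SpecialLinearGroup (Fin 2) ℚ) L) ∧
    ¬ GRecognizable (Matrix.SpecialLinearGroup (Fin 2) ℤ) LoddPow := by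
  refine ⟨gRecognizable_SL2Q_LoddPow, fun α _ L h => ?_, not_gRecognizable_SL2Z_LoddPow⟩
  exact h.of_injective (Matrix.SpecialLinearGroup.map (Int.castRingHom ℚ))
    Matrix.SpecialLinearGroup.map_intCast_injective
end
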